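/- If x is a position in Moore's nim(n, ≤k) with n > k and some column sum M(x)_j not congruent to 0 mod k+1, then there exists a move from x (reducing at most k piles, each by a positive amount) to a position x' all of whose column sums are congruent to 0 mod k+1. -/

import Mathlib

/-- The `j`-th binary digit of `m`. -/
def digit (m j : ℕ) : ℕ := m / 2 ^ j % 2

/-- The `j`-th column sum of the Bouton matrix of a position. -/
def colSum {n : ℕ} (x : Fin n → ℕ) (j : ℕ) : ℕ := ∑ i, digit (x i) j

/-- A move of classical nim: strictly reduce exactly one pile. -/
def NimMove {n : ℕ} (x y : Fin n → ℕ) : Prop :=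
  ∃ i, y i < x i ∧ ∀ j, j ≠ i → y j = x j

/-- A move of Moore's nim(n, ≤k): strictly reduce at least one and at most `k` piles. -/
def MooreMove (k : ℕ) {n : ℕ} (x y : Fin n → ℕ) : Prop :=
  ∃ S : Finset (Fin n), S.Nonempty ∧ S.card ≤ k ∧ (∀ i ∈ S, y i < x i) ∧ ∀ i ∉ S, y i = x i

/-- A move of exact (n, k) nim: strictly reduce exactly `k` piles. -/
def ExactMove (k : ℕ) {n : ℕ} (x y : Fin n → ℕ) : Prop :=
  ∃ S : Finset (Fin n), S.card = k ∧ (∀ i ∈ S, y i < x i) ∧ ∀ i ∉ S, y i = x i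

/-- N-positions of an impartial game: there is a move to a position all of whose
moves lead to N-positions (i.e. a move to a P-position). -/
inductive NPos {α : Type*} (Move : α → α → Prop) : α → Prop where
  | intro {x y : α} (h : Move x y) (hy : ∀ z, Move y z → NPos Move z) : NPos Move x

/-- P-positions of an impartial game: every move leads to an N-position
(in particular, terminal positions are P-positions). -/
def PPos {α : Type*} (Move : α → α → Prop) (x : α) : Prop :=
  ∀ y, Move x y → NPos Move y

/-!
Settle the binary columns from the top down, keeping a set `S` of *free* piles: those already
lowered in a higher column, whose remaining digits may be chosen at will. Suppose the other piles
carry `f` ones in the current column, and let `r = f % (k + 1)`. Either `#S + r ≤ k`, and clearing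
`r` of these ones balances the column while freeing only `r` further piles; or `k + 1 - r ≤ #S`,
and the free piles can supply the `k + 1 - r` missing ones. So at most `k` piles are ever free.
-/

section Balancing

open Finset

variable {ι : Type*} {k m q : ℕ}

lemma digit_add_two_pow {a : ℕ} (ha : a < 2 ^ m) (j : ℕ) :
    digit (a + 2 ^ m) j = digit a j + if j = m then 1 else 0 := by
  simp only [digit, ← Nat.toNat_testBit]
  rw [add_comm]
  rcases lt_trichotomy j m with hj | rfl | hj
  · simp [Nat.testBit_two_pow_add_gt hj, hj.ne]
  · simp [Nat.testBit_two_pow_add_eq, Nat.testBit_lt_two_pow ha]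
  · have hlt : 2 ^ m + a < 2 ^ j :=
      calc 2 ^ m + a < 2 ^ (m + 1) := by rw [pow_succ]; lia
        _ ≤ 2 ^ j := Nat.pow_le_pow_right two_pos hj
    simp [Nat.testBit_lt_two_pow hlt, Nat.testBit_lt_two_pow (Nat.lt_of_add_left_lt hlt), hj.ne']

lemma mod_two_pow_succ_eq_add_ite (a m : ℕ) :
    a % 2 ^ (m + 1) = a % 2 ^ m + if digit a m = 1 then 2 ^ m else 0 := by
  rw [Nat.mod_pow_succ, ← digit]
  rcases Nat.mod_two_eq_zero_or_one (a / 2 ^ m) with h | h <;> simp [digit, h]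

lemma exists_subsets_dvd_card_sdiff_add_card [DecidableEq ι] {S : Finset ι} (hS : #S ≤ k)
    (F : Finset ι) :
    ∃ R ⊆ F, ∃ U ⊆ S, #S + #R ≤ k ∧ k + 1 ∣ #(F \ R) + #U := by
  by_cases h : #S + #F % (k + 1) ≤ k
  · obtain ⟨R, hRF, hR⟩ := exists_subset_card_eq (Nat.mod_le #F (k + 1))
    refine ⟨R, hRF, ∅, empty_subset S, by rwa [hR], ?_⟩
    rw [card_empty, add_zero, card_sdiff_of_subset hRF, hR]
    exact Nat.dvd_sub_mod _
  · obtain ⟨U, hUS, hU⟩ := exists_subset_card_eq (s := S) (n := k + 1 - #F % (k + 1)) (by lia)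
    refine ⟨∅, empty_subset F, U, hUS, by simpa using hS, #F / (k + 1) + 1, ?_⟩
    have hdiv := Nat.div_add_mod #F (k + 1)
    have hlt := Nat.mod_lt #F k.succ_pos
    rw [sdiff_empty, hU, mul_add_one]
    lia

lemma exists_column_dvd_card [DecidableEq ι] {S : Finset ι} (hS : #S ≤ k) (F : Finset ι) :
    ∃ R ⊆ F, ∃ D, #(S ∪ R) ≤ k ∧ k + 1 ∣ #D ∧ Disjoint R D ∧ ∀ i ∉ S ∪ R, i ∈ D ↔ i ∈ F := by
  obtain ⟨R, hR, U, hU, hcard, hdvd⟩ := exists_subsets_dvd_card_sdiff_add_card hS (F \ S)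
  have hRS : Disjoint R S := disjoint_sdiff_self_left.mono_left hR
  have hFU : Disjoint ((F \ S) \ R) U :=
    disjoint_sdiff_self_left.mono sdiff_subset hU
  refine ⟨R, hR.trans sdiff_subset, (F \ S) \ R ∪ U, (card_union_le S R).trans hcard,
    by rwa [card_union_of_disjoint hFU], disjoint_union_right.2 ⟨disjoint_sdiff, hRS.mono_right hU⟩,
    fun i hi ↦ ?_⟩
  rw [notMem_union] at hi
  simp [hi.1, hi.2, notMem_mono hU hi.1]

variable [Fintype ι]

/-- A position is balanced modulo `q` if every column sum of its Bouton matrix is divisible by `q`.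
The piles are indexed by an arbitrary finite type, so the column sums are written out; for
`ι = Fin n` they are `colSum x j`. -/
def IsBalanced (q : ℕ) (x : ι → ℕ) : Prop := ∀ j, q ∣ ∑ i, digit (x i) j

lemma isBalanced_zero : IsBalanced q (0 : ι → ℕ) := by simp [IsBalanced, digit]

lemma IsBalanced.add_two_pow [DecidableEq ι] {y : ι → ℕ} (hy : IsBalanced q y)
    (hym : ∀ i, y i < 2 ^ m) {D : Finset ι} (hD : q ∣ #D) :
    IsBalanced q fun i ↦ y i + if i ∈ D then 2 ^ m else 0 := by
  intro j
  have hdigit (i : ι) : digit (y i + if i ∈ D then 2 ^ m else 0) j =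
      digit (y i) j + if i ∈ D then if j = m then 1 else 0 else 0 := by
    split_ifs <;> simp_all [digit_add_two_pow]
  simp only [hdigit, sum_add_distrib, sum_ite_mem, univ_inter, sum_const, smul_eq_mul]
  exact dvd_add (hy j) (hD.mul_right _)

lemma exists_isBalanced_of_free_piles (x : ι → ℕ) (m : ℕ) {S : Finset ι} (hS : #S ≤ k) :
    ∃ T, S ⊆ T ∧ #T ≤ k ∧ ∃ y : ι → ℕ, IsBalanced (k + 1) y ∧ (∀ i, y i < 2 ^ m) ∧
      (∀ i ∉ S, y i ≤ x i % 2 ^ m) ∧ ∀ i ∉ T, y i = x i % 2 ^ m := by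
  classical
  induction m generalizing S with
  | zero => exact ⟨S, subset_rfl, hS, 0, isBalanced_zero, by simp [Nat.mod_one]⟩
  | succ m ih =>
    let F : Finset ι := {i | digit (x i) m = 1}
    obtain ⟨R, hRF, D, hSR, hD, hRD, hDF⟩ := exists_column_dvd_card hS F
    obtain ⟨T, hT, hTk, y, hbal, hlt, hle, heq⟩ := ih hSR
    have hx (i : ι) : x i % 2 ^ (m + 1) = x i % 2 ^ m + if i ∈ F then 2 ^ m else 0 := by
      simp [F, mod_two_pow_succ_eq_add_ite]
    refine ⟨T, subset_union_left.trans hT, hTk, fun i ↦ y i + if i ∈ D then 2 ^ m else 0,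
      hbal.add_two_pow hlt hD, fun i ↦ ?lt, fun i hiS ↦ ?le, fun i hiT ↦ ?eq⟩
    case lt =>
      have := hlt i
      dsimp only
      rw [pow_succ]
      split_ifs <;> lia
    case le =>
      rw [hx]
      by_cases hiR : i ∈ R
      · simpa [disjoint_left.1 hRD hiR, hRF hiR] using (hlt i).le.trans (Nat.le_add_left _ _)
      · have hi : i ∉ S ∪ R := notMem_union.2 ⟨hiS, hiR⟩
        simpa only [hDF i hi] using Nat.add_le_add_right (hle i hi) _
    case eq => simp only [hDF i (notMem_mono hT hiT), heq i hiT, hx]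

lemma exists_le_isBalanced (k : ℕ) (x : ι → ℕ) :
    ∃ y ≤ x, #{i | y i < x i} ≤ k ∧ IsBalanced (k + 1) y := by
  have hx (i : ι) : x i < 2 ^ ∑ i, x i :=
    (single_le_sum_of_canonicallyOrdered (mem_univ i)).trans_lt Nat.lt_two_pow_self
  obtain ⟨T, -, hT, y, hbal, -, hle, heq⟩ :=
    exists_isBalanced_of_free_piles x (∑ i, x i) (S := ∅) (Nat.zero_le k)
  simp only [Nat.mod_eq_of_lt (hx _)] at hle heq
  refine ⟨y, fun i ↦ hle i (notMem_empty i), (card_le_card fun i hi ↦ ?_).trans hT, hbal⟩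
  by_contra hiT
  exact ((mem_filter_univ i).1 hi).ne (heq i hiT)

lemma mooreMove_of_lt {n : ℕ} {x y : Fin n → ℕ} (hyx : y < x) (hk : #{i | y i < x i} ≤ k) :
    MooreMove k x y := by
  obtain ⟨hle, i, hi⟩ := Pi.lt_def.1 hyx
  refine ⟨({i | y i < x i} : Finset (Fin n)), ⟨i, by simpa using hi⟩, hk, by simp, fun i hi ↦ ?_⟩
  exact (hle i).antisymm (by simpa using hi)

end Balancing

theorem moore_move_balances_general {n k : ℕ} (x : Fin n → ℕ)
    (hx : ∃ j, colSum x j % (k + 1) ≠ 0) :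
    ∃ y, MooreMove k x y ∧ ∀ j, colSum y j % (k + 1) = 0 := by
  obtain ⟨y, hyx, hcard, hbal⟩ := exists_le_isBalanced k x
  have hcol (j : ℕ) : colSum y j % (k + 1) = 0 := Nat.mod_eq_zero_of_dvd (hbal j)
  have hne : y ≠ x := by
    rintro rfl
    obtain ⟨j, hj⟩ := hx
    exact hj (hcol j)
  exact ⟨y, mooreMove_of_lt (hyx.lt_of_ne hne) hcard, hcol⟩

/-- from any position with some column sum ≢ 0 mod k+1 there is a
Moore move to a position with all column sums ≡ 0 mod k+1 (when n > k). -/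
theorem moore_move_balances {n k : ℕ} (hnk : k < n) (x : Fin n → ℕ)
    (hx : ∃ j, colSum x j % (k + 1) ≠ 0) :
    ∃ y, MooreMove k x y ∧ ∀ j, colSum y j % (k + 1) = 0 :=
  moore_move_balances_general x hx
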